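/- Let m > 0 and define the continuous-time simple random walk transition kernel p_t(x,y) = ∑_{k=0}^∞ e^{−mt}(mt)^k/k! · P(S_k = y − x) for t > 0 and x, y ∈ ℤ, where S_k is the k-step discrete-time simple symmetric random walk started at 0. Then there exists a constant C > 0 (depending only on m) such that for all t ≥ 1 and all x, y ∈ ℤ, p_t(x,y) ≤ C/√t. -/

import Mathlib

/-- `P(S_k = z)` for the `k`-step simple symmetric random walk on `ℤ` started at `0`. -/
noncomputable def srwPMF (k : ℕ) (z : ℤ) : ℝ :=
  ((Finset.univ.filter
      (fun ε : Fin k → Bool => (∑ i, if ε i then (1 : ℤ) else -1) = z)).card : ℝ) / 2 ^ k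

/-- Transition kernel `p_t(x,y) = ∑_k e^{-mt}(mt)^k/k! P(S_k = y-x)` of the continuous-time
simple random walk on `ℤ` with total jump rate `m`. -/
noncomputable def ctKernel (m t : ℝ) (x y : ℤ) : ℝ :=
  ∑' k : ℕ, Real.exp (-(m * t)) * (m * t) ^ k / k.factorial * srwPMF k (y - x)

/-!
The mass function of `S_k` is at most `C(k, ⌊k/2⌋) / 2 ^ k`, whose square is at most `1 / (k + 1)`.
The kernel is the expectation of the mass function at an independent Poisson time `K` of mean `mt`,
so its square is at most `E[1 / (K + 1)] = (1 - e ^ (-mt)) / (mt)` by the Cauchy–Schwarz inequality.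
-/

open Finset MeasureTheory ProbabilityTheory
open scoped NNReal Nat

theorem sq_centralBinom_mul_le_four_pow (n : ℕ) :
    n.centralBinom ^ 2 * (2 * n + 1) ≤ 4 ^ (2 * n) := by
  induction n with
  | zero => simp
  | succ n ih =>
    refine Nat.le_of_mul_le_mul_left (c := (n + 1) ^ 2) ?_ (by positivity)
    calc (n + 1) ^ 2 * ((n + 1).centralBinom ^ 2 * (2 * (n + 1) + 1))
        = ((n + 1) * (n + 1).centralBinom) ^ 2 * (2 * n + 3) := by ring
      _ = n.centralBinom ^ 2 * (2 * n + 1) * (4 * ((2 * n + 1) * (2 * n + 3))) := by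
          rw [Nat.succ_mul_centralBinom_succ]; ring
      _ ≤ 4 ^ (2 * n) * (4 * (4 * (n + 1) ^ 2)) := by
          refine Nat.mul_le_mul ih ?_
          linarith
      _ = (n + 1) ^ 2 * 4 ^ (2 * (n + 1)) := by ring

theorem centralBinom_succ_eq_two_mul_choose (n : ℕ) :
    (n + 1).centralBinom = 2 * (2 * n + 1).choose n := by
  rw [Nat.centralBinom, mul_add_one, Nat.choose_succ_succ', Nat.choose_symm_half, ← two_mul]

theorem sq_choose_half_mul_le_four_pow (k : ℕ) : k.choose (k / 2) ^ 2 * (k + 1) ≤ 4 ^ k := by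
  obtain ⟨n, rfl | rfl⟩ := k.even_or_odd'
  · rw [Nat.mul_div_cancel_left n two_pos]
    exact sq_centralBinom_mul_le_four_pow n
  · rw [show (2 * n + 1) / 2 = n by lia]
    have h := sq_centralBinom_mul_le_four_pow (n + 1)
    rw [centralBinom_succ_eq_two_mul_choose] at h
    refine Nat.le_of_mul_le_mul_left (c := 4) ?_ four_pos
    calc 4 * ((2 * n + 1).choose n ^ 2 * (2 * n + 1 + 1))
        ≤ (2 * (2 * n + 1).choose n) ^ 2 * (2 * (n + 1) + 1) := by
          rw [mul_pow, mul_assoc]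
          gcongr <;> lia
      _ ≤ 4 ^ (2 * (n + 1)) := h
      _ = 4 * 4 ^ (2 * n + 1) := by ring

section Signs

variable {ι : Type*} [Fintype ι]

theorem sum_signs_eq_two_mul_card_sub_card (ε : ι → Bool) :
    ∑ i, (if ε i then (1 : ℤ) else -1) = 2 * #{i | ε i} - Fintype.card ι := by
  have sign_eq (i : ι) : (if ε i then (1 : ℤ) else -1) = 2 * (if ε i then 1 else 0) - 1 := by
    split_ifs <;> rfl
  simp only [sign_eq, sum_sub_distrib, ← mul_sum, sum_boole, sum_const, card_univ, nsmul_one]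

theorem card_filter_sum_signs_eq_le_choose_half [DecidableEq ι] (z : ℤ) :
    #{ε : ι → Bool | ∑ i, (if ε i then (1 : ℤ) else -1) = z} ≤
      (Fintype.card ι).choose (Fintype.card ι / 2) := by
  -- When `z + card ι` is odd or negative, `j` is a junk value but the left-hand set is empty.
  set j := ((z + Fintype.card ι) / 2).toNat
  calc #{ε : ι → Bool | ∑ i, (if ε i then (1 : ℤ) else -1) = z}
      ≤ #(powersetCard j (univ : Finset ι)) := by
        refine card_le_card_of_injOn (fun ε ↦ ({i | ε i} : Finset ι)) ?_ ?_
        · intro ε hε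
          have hz : ∑ i, (if ε i then (1 : ℤ) else -1) = z := (mem_filter.mp hε).2
          rw [sum_signs_eq_two_mul_card_sub_card] at hz
          exact mem_powersetCard.mpr ⟨subset_univ _, by lia⟩
        · intro ε _ ε' _ h
          ext i
          simpa using Finset.ext_iff.mp h i
    _ = (Fintype.card ι).choose j := by rw [card_powersetCard, card_univ]
    _ ≤ (Fintype.card ι).choose (Fintype.card ι / 2) := Nat.choose_le_middle _ _

end Signs

theorem srwPMF_le_choose_half_div (k : ℕ) (z : ℤ) :
    srwPMF k z ≤ k.choose (k / 2) / 2 ^ k := by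
  unfold srwPMF
  gcongr
  simpa only [Fintype.card_fin] using card_filter_sum_signs_eq_le_choose_half (ι := Fin k) z

theorem srwPMF_nonneg (k : ℕ) (z : ℤ) : 0 ≤ srwPMF k z := by
  unfold srwPMF
  positivity

theorem sq_srwPMF_le_inv_succ (k : ℕ) (z : ℤ) : srwPMF k z ^ 2 ≤ ((k : ℝ) + 1)⁻¹ := by
  have choose_bound : (k.choose (k / 2) : ℝ) ^ 2 * (k + 1) ≤ 4 ^ k :=
    mod_cast sq_choose_half_mul_le_four_pow k
  calc srwPMF k z ^ 2
      ≤ (k.choose (k / 2) / 2 ^ k) ^ 2 :=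
        pow_le_pow_left₀ (srwPMF_nonneg k z) (srwPMF_le_choose_half_div k z) 2
    _ = k.choose (k / 2) ^ 2 / 4 ^ k := by
        rw [div_pow, pow_right_comm]
        norm_num
    _ ≤ ((k : ℝ) + 1)⁻¹ := by
        rwa [← one_div, div_le_div_iff₀ (by positivity) (by positivity), one_mul]

theorem srwPMF_le_one (k : ℕ) (z : ℤ) : srwPMF k z ≤ 1 :=
  (sq_le_one_iff₀ (srwPMF_nonneg k z)).mp <|
    (sq_srwPMF_le_inv_succ k z).trans (inv_le_one_of_one_le₀ (by simp))

theorem memLp_srwPMF (μ : Measure ℕ) [IsFiniteMeasure μ] (p : ENNReal) (z : ℤ) :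
    MemLp (srwPMF · z) p μ :=
  memLp_of_bounded (.of_forall fun k ↦ ⟨srwPMF_nonneg k z, srwPMF_le_one k z⟩)
    (measurable_of_countable _).aestronglyMeasurable p

theorem integrable_inv_succ (μ : Measure ℕ) [IsFiniteMeasure μ] :
    Integrable (fun k : ℕ ↦ ((k : ℝ) + 1)⁻¹) μ := by
  refine .of_bound (measurable_of_countable _).aestronglyMeasurable 1 (.of_forall fun k ↦ ?_)
  rw [Real.norm_of_nonneg (by positivity)]
  exact inv_le_one_of_one_le₀ (by simp)

theorem sq_integral_le_integral_sq {Ω : Type*} [MeasurableSpace Ω] {μ : Measure Ω}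
    [IsProbabilityMeasure μ] {X : Ω → ℝ} (hX : MemLp X 2 μ) :
    (∫ ω, X ω ∂μ) ^ 2 ≤ ∫ ω, X ω ^ 2 ∂μ :=
  sub_nonneg.mp <| (variance_nonneg X μ).trans_eq (variance_eq_sub hX)

theorem integral_inv_succ_poissonMeasure {r : ℝ≥0} (hr : r ≠ 0) :
    ∫ k : ℕ, ((k : ℝ) + 1)⁻¹ ∂poissonMeasure r = (1 - Real.exp (-r)) / r := by
  have tail_sum : HasSum (fun k : ℕ ↦ Real.exp (-r) * r ^ (k + 1) / (k + 1)!)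
      (1 - Real.exp (-r)) := by
    simpa using (hasSum_nat_add_iff' 1).mpr (hasSum_one_poissonMeasure r)
  have shift (k : ℕ) : Real.exp (-r) * r ^ k / k ! * ((k : ℝ) + 1)⁻¹ =
      Real.exp (-r) * r ^ (k + 1) / (k + 1)! / r := by
    rw [Nat.factorial_succ, pow_succ']
    push_cast
    field_simp
  simp only [integral_poissonMeasure, smul_eq_mul, shift]
  exact (tail_sum.div_const (r : ℝ)).tsum_eq

theorem ctKernel_eq_integral_poissonMeasure {m t : ℝ} {r : ℝ≥0} (hr : m * t = r) (x y : ℤ) :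
    ctKernel m t x y = ∫ k, srwPMF k (y - x) ∂poissonMeasure r := by
  rw [integral_poissonMeasure, ctKernel, hr]
  rfl

theorem sq_integral_srwPMF_poissonMeasure_le {r : ℝ≥0} (hr : r ≠ 0) (z : ℤ) :
    (∫ k, srwPMF k z ∂poissonMeasure r) ^ 2 ≤ (1 - Real.exp (-r)) / r :=
  calc (∫ k, srwPMF k z ∂poissonMeasure r) ^ 2
      ≤ ∫ k, srwPMF k z ^ 2 ∂poissonMeasure r :=
        sq_integral_le_integral_sq (memLp_srwPMF _ 2 z)
    _ ≤ ∫ k : ℕ, ((k : ℝ) + 1)⁻¹ ∂poissonMeasure r :=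
        integral_mono (memLp_srwPMF _ 2 z).integrable_sq (integrable_inv_succ _)
          (sq_srwPMF_le_inv_succ · z)
    _ = (1 - Real.exp (-r)) / r := integral_inv_succ_poissonMeasure hr

theorem ctKernel_bound_general {m t : ℝ} (hmt : 0 < m * t) (x y : ℤ) :
    ctKernel m t x y ≤ 1 / √(m * t) := by
  obtain ⟨r, hr⟩ : ∃ r : ℝ≥0, m * t = r := ⟨⟨m * t, hmt.le⟩, rfl⟩
  have hr0 : r ≠ 0 := by
    rintro rfl
    exact hmt.ne' hr
  rw [ctKernel_eq_integral_poissonMeasure hr, hr, ← Real.sqrt_one, ← Real.sqrt_div zero_le_one]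
  refine Real.le_sqrt_of_sq_le ((sq_integral_srwPMF_poissonMeasure_le hr0 (y - x)).trans ?_)
  gcongr
  linarith [Real.exp_pos (-r)]

/-- there is a constant `C > 0` (depending only on `m`) such that
`p_t(x,y) ≤ C/√t` for all `t ≥ 1` and all `x, y ∈ ℤ`. -/
theorem ctKernel_bound (m : ℝ) (hm : 0 < m) :
    ∃ C : ℝ, 0 < C ∧ ∀ t : ℝ, 1 ≤ t → ∀ x y : ℤ, ctKernel m t x y ≤ C / Real.sqrt t := by
  refine ⟨1 / √m, by positivity, fun t ht x y ↦ ?_⟩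
  rw [div_div, ← Real.sqrt_mul hm.le]
  exact ctKernel_bound_general (by positivity) x y
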